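/- arXiv:1409.4150 — 2 statements merged into one kernel-verified Lean document; each statement's English description precedes it below -/
import Mathlib

section
/- Weak duality for the mechanism-design program: Let X = ∏_{i=1}^n [aᵢ, bᵢ] ⊂ ℝⁿ be a compact box with 0 ≤ aᵢ < bᵢ for each i, and let μ be a finite signed Borel measure on X. Then for every u ∈ 𝒰(X) ∩ ℒ₁(X) and every finite nonnegative Borel measure γ on X × X whose marginals satisfy γ₁ − γ₂ ≽_cvx μ, one has ∫_X u dμ ≤ ∫_{X×X} ‖x − y‖₁ dγ(x,y); consequently sup_{u ∈ 𝒰(X) ∩ ℒ₁(X)} ∫_X u dμ ≤ inf_{γ : γ₁ − γ₂ ≽_cvx μ} ∫_{X×X} ‖x − y‖₁ dγ. -/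
/-!
Testing `γ₁ - γ₂ ≽_cvx μ` on `u` itself gives `∫ u dμ ≤ ∫ u dγ₁ - ∫ u dγ₂`. The right-hand side is
`∫ (u x - u y) dγ(x, y)`, and the Lipschitz condition bounds the integrand by the cost `‖x - y‖₁`.
-/

open MeasureTheory Set

/-- ℓ¹ distance on `Fin n → ℝ`. -/
noncomputable def l1dist {n : ℕ} (x y : Fin n → ℝ) : ℝ := ∑ i, |x i - y i|

/-- The box `∏ i, [a i, b i]` in `ℝⁿ`. -/
def box {n : ℕ} (a b : Fin n → ℝ) : Set (Fin n → ℝ) := {x | ∀ i, x i ∈ Set.Icc (a i) (b i)}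

/-- `u ∈ 𝒰(X)`: continuous, coordinatewise nondecreasing and convex on `X`. -/
def memU {n : ℕ} (X : Set (Fin n → ℝ)) (u : (Fin n → ℝ) → ℝ) : Prop :=
  ContinuousOn u X ∧ (∀ x ∈ X, ∀ y ∈ X, (∀ i, x i ≤ y i) → u x ≤ u y) ∧ ConvexOn ℝ X u

/-- `u ∈ ℒ₁(X)`: 1-Lipschitz with respect to the ℓ¹ norm on `X`. -/
def memL1 {n : ℕ} (X : Set (Fin n → ℝ)) (u : (Fin n → ℝ) → ℝ) : Prop :=
  ∀ x ∈ X, ∀ y ∈ X, u x - u y ≤ l1dist x y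

theorem box_eq_Icc {n : ℕ} (a b : Fin n → ℝ) : box a b = Icc a b := by
  ext x
  simp only [box, mem_ofPred_eq, mem_Icc, Pi.le_def, forall_and]

theorem isCompact_box {n : ℕ} (a b : Fin n → ℝ) : IsCompact (box a b) :=
  box_eq_Icc a b ▸ isCompact_Icc

theorem continuous_l1dist {n : ℕ} :
    Continuous fun p : (Fin n → ℝ) × (Fin n → ℝ) => l1dist p.1 p.2 := by
  unfold l1dist
  fun_prop

theorem integrable_of_continuousOn_isCompact_of_ae_mem {α E : Type*} [TopologicalSpace α]
    [T2Space α] [MeasurableSpace α] [OpensMeasurableSpace α] [NormedAddCommGroup E]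
    [SecondCountableTopologyEither α E] {ν : Measure α} [IsFiniteMeasureOnCompacts ν] {K : Set α}
    (hK : IsCompact K) (hν : ∀ᵐ x ∂ν, x ∈ K) {f : α → E} (hf : ContinuousOn f K) :
    Integrable f ν := by
  rw [← Measure.restrict_eq_self_of_ae_mem hν]
  exact hf.integrableOn_compact' hK hK.measurableSet

section Coupling

variable {α β : Type*} [MeasurableSpace α] [MeasurableSpace β] {γ : Measure (α × β)}

theorem ae_fst_mem_of_ae_mem_prod {s : Set α} {t : Set β} (hs : MeasurableSet s)
    (hγ : ∀ᵐ p ∂γ, p ∈ s ×ˢ t) : ∀ᵐ x ∂γ.fst, x ∈ s :=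
  (ae_map_iff measurable_fst.aemeasurable hs).2 (hγ.mono fun _ hp => hp.1)

theorem ae_snd_mem_of_ae_mem_prod {s : Set α} {t : Set β} (ht : MeasurableSet t)
    (hγ : ∀ᵐ p ∂γ, p ∈ s ×ˢ t) : ∀ᵐ y ∂γ.snd, y ∈ t :=
  (ae_map_iff measurable_snd.aemeasurable ht).2 (hγ.mono fun _ hp => hp.2)

theorem integral_fst_sub_integral_snd_le {u : α → ℝ} {v : β → ℝ} {c : α × β → ℝ}
    (hu : Integrable u γ.fst) (hv : Integrable v γ.snd) (hc : Integrable c γ)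
    (huv : ∀ᵐ p ∂γ, u p.1 - v p.2 ≤ c p) :
    ∫ x, u x ∂γ.fst - ∫ y, v y ∂γ.snd ≤ ∫ p, c p ∂γ := by
  have hu' : Integrable (fun p => u p.1) γ := hu.comp_measurable measurable_fst
  have hv' : Integrable (fun p => v p.2) γ := hv.comp_measurable measurable_snd
  calc ∫ x, u x ∂γ.fst - ∫ y, v y ∂γ.snd
      = ∫ p, u p.1 ∂γ - ∫ p, v p.2 ∂γ := by
        rw [Measure.fst, Measure.snd,
          integral_map measurable_fst.aemeasurable hu.aestronglyMeasurable,
          integral_map measurable_snd.aemeasurable hv.aestronglyMeasurable]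
    _ = ∫ p, (u p.1 - v p.2) ∂γ := (integral_sub hu' hv').symm
    _ ≤ ∫ p, c p ∂γ := integral_mono_ae (hu'.sub hv') hc huv

end Coupling

theorem weak_duality_general {α : Type*} [TopologicalSpace α] [T2Space α]
    [SecondCountableTopology α] [MeasurableSpace α] [OpensMeasurableSpace α] {X : Set α}
    (hX : IsCompact X) {𝓕 : Set (α → ℝ)} {J : (α → ℝ) → ℝ} {c : α × α → ℝ}
    (hc : ContinuousOn c (X ×ˢ X)) {u : α → ℝ} (hu : u ∈ 𝓕) (huX : ContinuousOn u X)
    (huc : ∀ x ∈ X, ∀ y ∈ X, u x - u y ≤ c (x, y))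
    {γ : Measure (α × α)} [IsFiniteMeasure γ] (hγ : ∀ᵐ p ∂γ, p ∈ X ×ˢ X)
    (hdom : ∀ v ∈ 𝓕, J v ≤ ∫ x, v x ∂γ.fst - ∫ x, v x ∂γ.snd) :
    J u ≤ ∫ p, c p ∂γ := by
  have hfst : Integrable u γ.fst := integrable_of_continuousOn_isCompact_of_ae_mem hX
    (ae_fst_mem_of_ae_mem_prod hX.measurableSet hγ) huX
  have hsnd : Integrable u γ.snd := integrable_of_continuousOn_isCompact_of_ae_mem hX
    (ae_snd_mem_of_ae_mem_prod hX.measurableSet hγ) huX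
  have hcost : Integrable c γ :=
    integrable_of_continuousOn_isCompact_of_ae_mem (hX.prod hX) hγ hc
  calc J u ≤ ∫ x, u x ∂γ.fst - ∫ x, u x ∂γ.snd := hdom u hu
    _ ≤ ∫ p, c p ∂γ := integral_fst_sub_integral_snd_le hfst hsnd hcost <|
        hγ.mono fun p hp => huc p.1 hp.1 p.2 hp.2

/-- **Weak duality.** The (finite signed Borel) measure `μ` on the box `X` is represented by
its positive and negative parts `μp`, `μn` (finite nonnegative Borel measures supported in `X`).
For every feasible utility `u ∈ 𝒰(X) ∩ ℒ₁(X)` and every finite nonnegative Borel measure `γ`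
on `X × X` whose marginals satisfy `γ₁ - γ₂ ≽_cvx μ`, one has
`∫ u dμ ≤ ∫ ‖x - y‖₁ dγ(x,y)`. -/
theorem weak_duality {n : ℕ} (a b : Fin n → ℝ) (hab : ∀ i, 0 ≤ a i ∧ a i < b i)
    (μp μn : Measure (Fin n → ℝ)) [IsFiniteMeasure μp] [IsFiniteMeasure μn]
    (hμp : μp (box a b)ᶜ = 0) (hμn : μn (box a b)ᶜ = 0)
    (u : (Fin n → ℝ) → ℝ) (hu : memU (box a b) u) (hu1 : memL1 (box a b) u)
    (γ : Measure ((Fin n → ℝ) × (Fin n → ℝ))) (hγfin : IsFiniteMeasure γ)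
    (hγsupp : γ ((box a b ×ˢ box a b)ᶜ) = 0)
    (hdom : ∀ v : (Fin n → ℝ) → ℝ, memU (box a b) v →
      (∫ x, v x ∂μp) - (∫ x, v x ∂μn) ≤
        (∫ x, v x ∂(γ.map Prod.fst)) - (∫ x, v x ∂(γ.map Prod.snd))) :
    (∫ x, u x ∂μp) - (∫ x, u x ∂μn) ≤ ∫ p, l1dist p.1 p.2 ∂γ :=
  weak_duality_general (J := fun v => ∫ x, v x ∂μp - ∫ x, v x ∂μn) (isCompact_box a b)
    continuous_l1dist.continuousOn hu hu.1 hu1 hγsupp hdom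
end

section
/- Fenchel–Rockafellar duality step: Let X be a compact convex subset of ℝⁿ and let μ be a finite signed Borel measure on X with μ(X) = 0 and Jordan decomposition μ = μ₊ − μ₋. Then inf over finite nonnegative Borel measures γ on X × X with γ₁ ≽_cvx μ₊ and γ₂ ≼_cvx μ₋ of ∫_{X×X} ‖x − y‖₁ dγ(x,y) equals sup over pairs φ, ψ ∈ 𝒰(X) satisfying φ(x) − ψ(y) ≤ ‖x − y‖₁ for all x, y ∈ X of (∫_X φ dμ₊ − ∫_X ψ dμ₋), and the infimum on the left-hand side is achieved by some γ. -/
open MeasureTheory Set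

/-!
Weak duality is integration of `φ x - ψ y ≤ c x y` against a plan. For strong duality, the
constraints on a plan `γ` all read `∫ f ∂γ ≤ r`, with `(f, r)` in the convex cone of the pairs
`(ψ y - φ x, ∫ ψ ∂ν - ∫ φ ∂μ)`, and the bound `∫ c ∂γ ≤ s` adds the single generator `(c, s)`. By
Farkas' lemma such a `γ` exists unless the enlarged cone contains some `(f, r)` with `f ≥ 0 > r`;
rescaling would turn it into a dual pair of value greater than `s`. Farkas' lemma is M. Riesz'
extension theorem, which yields a positive functional, and the Riesz–Markov–Kakutani theorem turns
this functional into a measure. The extension exists because the constant test functions put some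
`(1, r)` into the cone, that is, they bound the mass of `γ` a priori.
-/

open Filter Topology

section ConicDuality

variable {W : Type*} [AddCommGroup W] [PartialOrder W] [IsOrderedAddMonoid W] [Module ℝ W]
  [PosSMulMono ℝ W]

/-- **Farkas' lemma** in an ordered vector space with an order unit `e`. -/
theorem exists_positiveLinearMap_le {e : W} (he : ∀ w : W, ∃ a : ℝ, 0 ≤ a ∧ w ≤ a • e)
    (S : PointedCone ℝ (W × ℝ)) (heS : ∃ r, (e, r) ∈ S) (hS : ∀ p ∈ S, 0 ≤ p.1 → 0 ≤ p.2) :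
    ∃ Λ : W →ₚ[ℝ] ℝ, ∀ p ∈ S, Λ p.1 ≤ p.2 := by
  let T : PointedCone ℝ (W × ℝ) := S ⊔ (PointedCone.positive ℝ W).map (-LinearMap.inl ℝ W ℝ)
  have sub_mem {p : W × ℝ} (hp : p ∈ S) {w : W} (hw : 0 ≤ w) : p - (w, 0) ∈ T :=
    sub_eq_add_neg p (w, 0) ▸ Submodule.add_mem_sup hp (PointedCone.mem_map.2 ⟨w, hw, rfl⟩)
  have nonneg_of_mem {r : ℝ} (h : ((0 : W), r) ∈ T) : 0 ≤ r := by
    obtain ⟨p, hp, q, hq, hpq⟩ := Submodule.mem_sup.1 h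
    obtain ⟨w, hw, rfl⟩ := PointedCone.mem_map.1 hq
    have hp_fst : p.1 = w := by simpa [add_neg_eq_zero] using congrArg Prod.fst hpq
    have hp_snd : p.2 = r := by simpa using congrArg Prod.snd hpq
    exact hp_snd ▸ hS p hp (hp_fst ▸ hw)
  let sndOnKer : (W × ℝ) →ₗ.[ℝ] ℝ :=
    { domain := LinearMap.ker (LinearMap.fst ℝ W ℝ)
      toFun := (LinearMap.snd ℝ W ℝ).comp (Submodule.subtype _) }
  obtain ⟨g, hg_snd, hg_nonneg⟩ := riesz_extension T sndOnKer
    (by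
      rintro ⟨⟨w, r⟩, hw⟩ hT
      obtain rfl : w = 0 := hw
      exact nonneg_of_mem hT)
    (by
      rintro ⟨w, r⟩
      obtain ⟨m, hm⟩ := heS
      obtain ⟨a, ha, hwa⟩ := he w
      refine ⟨⟨(0, a * m - r), rfl⟩, ?_⟩
      convert sub_mem (S.smul_mem ha hm) (sub_nonneg.2 hwa) using 1
      ext <;> simp)
  have hg_zero (r : ℝ) : g (0, r) = r := hg_snd ⟨(0, r), rfl⟩
  have hg_apply (p : W × ℝ) : g p = g (p.1, 0) + p.2 := by
    rw [← hg_zero p.2, ← map_add, Prod.mk_add_mk, add_zero, zero_add]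
  refine ⟨PositiveLinearMap.mk₀ (-(g.comp (LinearMap.inl ℝ W ℝ))) fun w hw ↦ ?_, fun p hp ↦ ?_⟩
  · simpa [← map_neg] using hg_nonneg _ (sub_mem S.zero_mem hw)
  · have hgp : 0 ≤ g (p.1, 0) + p.2 := hg_apply p ▸ hg_nonneg p (Submodule.mem_sup_left hp)
    exact neg_le_iff_add_nonneg'.2 hgp

theorem nonneg_add_mul_of_nonneg_add_smul {S : PointedCone ℝ (W × ℝ)} {c : W} {s : ℝ}
    (hfeas : ∃ p ∈ S, -p.1 ≤ c) (hs : ∀ p ∈ S, -p.1 ≤ c → -p.2 ≤ s) {p : W × ℝ} (hp : p ∈ S)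
    {t : ℝ} (ht : 0 ≤ t) (h : 0 ≤ p.1 + t • c) : 0 ≤ p.2 + t * s := by
  have nonneg_of_pos {q : W × ℝ} (hq : q ∈ S) {a : ℝ} (ha : 0 < a) (hqa : 0 ≤ q.1 + a • c) :
      0 ≤ q.2 + a * s := by
    have hle : -(a⁻¹ • q).1 ≤ c := by
      rw [Prod.smul_fst, ← smul_neg, inv_smul_le_iff_of_pos ha]
      exact neg_le_iff_add_nonneg'.2 hqa
    have := hs _ (S.smul_mem (inv_nonneg.2 ha.le) hq) hle
    rw [Prod.smul_snd, smul_eq_mul, ← mul_neg, inv_mul_le_iff₀ ha] at this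
    linarith
  -- Moving `(p, t)` towards the feasible point makes the coefficient of `c` positive when `t = 0`.
  obtain ⟨q, hq, hqc⟩ := hfeas
  have hlim : Tendsto (fun ε : ℝ ↦ (p + ε • q).2 + (t + ε) * s) (𝓝[>] 0) (𝓝 (p.2 + t * s)) :=
    tendsto_nhdsWithin_of_tendsto_nhds (Continuous.tendsto' (by fun_prop) _ _ (by simp))
  refine ge_of_tendsto hlim (eventually_mem_nhdsWithin.mono fun ε (hε : 0 < ε) ↦ ?_)
  refine nonneg_of_pos (S.add_mem hp (S.smul_mem hε.le hq)) (by positivity) ?_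
  calc (0 : W) ≤ (p.1 + t • c) + ε • (q.1 + c) :=
        add_nonneg h (smul_nonneg hε.le (neg_le_iff_add_nonneg'.1 hqc))
    _ = (p + ε • q).1 + (t + ε) • c := by
        simp only [Prod.fst_add, Prod.smul_fst]
        module

/-- Strong duality for the conic program of minimizing `Λ c` over the positive functionals `Λ` with
`Λ w ≤ r` for all `(w, r) ∈ S`, whose dual maximizes `-r` over the `(w, r) ∈ S` with `-w ≤ c`. -/
theorem exists_positiveLinearMap_le_and_apply_le {e : W}
    (he : ∀ w : W, ∃ a : ℝ, 0 ≤ a ∧ w ≤ a • e) (S : PointedCone ℝ (W × ℝ))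
    (heS : ∃ r, (e, r) ∈ S) {c : W} {s : ℝ} (hfeas : ∃ p ∈ S, -p.1 ≤ c)
    (hs : ∀ p ∈ S, -p.1 ≤ c → -p.2 ≤ s) :
    ∃ Λ : W →ₚ[ℝ] ℝ, (∀ p ∈ S, Λ p.1 ≤ p.2) ∧ Λ c ≤ s := by
  obtain ⟨r, hr⟩ := heS
  obtain ⟨Λ, hΛ⟩ := exists_positiveLinearMap_le he (S ⊔ PointedCone.hull ℝ {(c, s)})
    ⟨r, Submodule.mem_sup_left hr⟩ (by
      intro p hp h
      obtain ⟨q, hq, w, hw, rfl⟩ := Submodule.mem_sup.1 hp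
      obtain ⟨t, rfl⟩ := Submodule.mem_span_singleton.1 hw
      exact nonneg_add_mul_of_nonneg_add_smul hfeas hs hq t.2 h)
  exact ⟨Λ, fun p hp ↦ hΛ p (Submodule.mem_sup_left hp),
    hΛ (c, s) (Submodule.mem_sup_right (Submodule.mem_span_singleton_self _))⟩

end ConicDuality

section ConicDualityMeasure

variable {K : Type*} [TopologicalSpace K] [CompactSpace K] [T2Space K] [MeasurableSpace K]
  [BorelSpace K]

theorem exists_measure_integral_eq (Λ : C(K, ℝ) →ₚ[ℝ] ℝ) :
    ∃ γ : Measure K, IsFiniteMeasure γ ∧ ∀ f : C(K, ℝ), ∫ x, f x ∂γ = Λ f := by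
  let Λc : CompactlySupportedContinuousMap K ℝ →ₚ[ℝ] ℝ :=
    { toFun := fun f ↦ Λ f.toContinuousMap
      map_add' := fun f g ↦ map_add Λ f.toContinuousMap g.toContinuousMap
      map_smul' := fun a f ↦ map_smul Λ a f.toContinuousMap
      monotone' := fun f g hfg ↦ Λ.monotone' hfg }
  exact ⟨RealRMK.rieszMeasure Λc, inferInstance, fun f ↦ RealRMK.integral_rieszMeasure Λc
    (CompactlySupportedContinuousMap.continuousMapEquiv f)⟩

theorem exists_measure_integral_le_and_integral_le (S : PointedCone ℝ (C(K, ℝ) × ℝ))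
    (hone : ∃ r, ((1 : C(K, ℝ)), r) ∈ S) {c : C(K, ℝ)} {s : ℝ} (hfeas : ∃ p ∈ S, -p.1 ≤ c)
    (hs : ∀ p ∈ S, -p.1 ≤ c → -p.2 ≤ s) :
    ∃ γ : Measure K, IsFiniteMeasure γ ∧ (∀ p ∈ S, ∫ x, p.1 x ∂γ ≤ p.2) ∧ ∫ x, c x ∂γ ≤ s := by
  have one_orderUnit (f : C(K, ℝ)) : ∃ a : ℝ, 0 ≤ a ∧ f ≤ a • (1 : C(K, ℝ)) :=
    ⟨‖f‖, norm_nonneg f, fun x ↦ by simpa using f.apply_le_norm x⟩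
  obtain ⟨Λ, hΛS, hΛc⟩ := exists_positiveLinearMap_le_and_apply_le one_orderUnit S hone hfeas hs
  obtain ⟨γ, hγ_fin, hγ⟩ := exists_measure_integral_eq Λ
  exact ⟨γ, hγ_fin, fun p hp ↦ (hγ p.1).trans_le (hΛS p hp), (hγ c).trans_le hΛc⟩

end ConicDualityMeasure

section CompactSupport

variable {E : Type*} [TopologicalSpace E] [T2Space E] [MeasurableSpace E] [BorelSpace E]
  {X : Set E} {u : E → ℝ}

theorem integrable_of_continuousOn_isCompact {μ : Measure E} [IsFiniteMeasure μ]
    (hX : IsCompact X) (hu : ContinuousOn u X) (hμ : ∀ᵐ x ∂μ, x ∈ X) : Integrable u μ := by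
  simpa only [IntegrableOn, Measure.restrict_eq_self_of_ae_mem hμ] using
    hu.integrableOn_compact (μ := μ) hX

variable {Ω : Type*} [MeasurableSpace Ω] {γ : Measure Ω} [IsFiniteMeasure γ] {g : Ω → E}

theorem integrable_map_of_continuousOn_isCompact (hX : IsCompact X) (hu : ContinuousOn u X)
    (hg : Measurable g) (hγ : ∀ᵐ ω ∂γ, g ω ∈ X) : Integrable u (γ.map g) :=
  integrable_of_continuousOn_isCompact hX hu
    ((ae_map_iff hg.aemeasurable hX.measurableSet).2 hγ)

theorem integrable_comp_of_continuousOn_isCompact (hX : IsCompact X) (hu : ContinuousOn u X)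
    (hg : Measurable g) (hγ : ∀ᵐ ω ∂γ, g ω ∈ X) : Integrable (fun ω ↦ u (g ω)) γ :=
  (integrable_map_of_continuousOn_isCompact hX hu hg hγ).comp_measurable hg

theorem integral_map_of_continuousOn_isCompact (hX : IsCompact X) (hu : ContinuousOn u X)
    (hg : Measurable g) (hγ : ∀ᵐ ω ∂γ, g ω ∈ X) :
    ∫ x, u x ∂(γ.map g) = ∫ ω, u (g ω) ∂γ :=
  integral_map hg.aemeasurable
    (integrable_map_of_continuousOn_isCompact hX hu hg hγ).aestronglyMeasurable

theorem integral_sub_integral_le_of_sub_le {F : Type*} [TopologicalSpace F] [T2Space F]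
    [MeasurableSpace F] [BorelSpace F] {Y : Set F} {μ : Measure E} {ν : Measure F}
    [IsFiniteMeasure μ] [IsFiniteMeasure ν] (hX : IsCompact X) (hY : IsCompact Y)
    (hμ : ∀ᵐ x ∂μ, x ∈ X) (hν : ∀ᵐ y ∂ν, y ∈ Y) (hmass : μ univ = ν univ) {φ : E → ℝ} {ψ : F → ℝ}
    (hφ : ContinuousOn φ X) (hψ : ContinuousOn ψ Y) {C : ℝ}
    (h : ∀ x ∈ X, ∀ y ∈ Y, φ x - ψ y ≤ C) :
    (∫ x, φ x ∂μ) - ∫ y, ψ y ∂ν ≤ C * μ.real univ := by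
  have hreal : ν.real univ = μ.real univ := congrArg ENNReal.toReal hmass.symm
  rcases Y.eq_empty_or_nonempty with rfl | hne
  · have hν0 : ν = 0 := by simpa using hν
    have hμ0 : μ = 0 := by simpa [hν0] using hmass
    simp [hμ0, hν0]
  obtain ⟨y, hy, hmin⟩ := hY.exists_isMinOn hne hψ
  have hφ_le : ∫ x, φ x ∂μ ≤ ∫ _, (ψ y + C) ∂μ := by
    refine integral_mono_ae (integrable_of_continuousOn_isCompact hX hφ hμ)
      (integrable_const _) ?_
    filter_upwards [hμ] with x hx
    linarith [h x hx y hy]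
  have hψ_ge : ∫ _, ψ y ∂ν ≤ ∫ y, ψ y ∂ν := by
    refine integral_mono_ae (integrable_const _)
      (integrable_of_continuousOn_isCompact hY hψ hν) ?_
    filter_upwards [hν] with y' hy'
    exact hmin hy'
  simp only [integral_const, smul_eq_mul, hreal] at hφ_le hψ_ge
  linarith

end CompactSupport

section RelaxedTransport

/-- The costs of the plans of a relaxed transport problem: finite measures on `X × Y` whose first
marginal dominates `μ` against the test functions in `U`, and whose second marginal is dominated by
`ν` against those in `V`. -/
def relaxedTransportCosts {E F : Type*} [MeasurableSpace E] [MeasurableSpace F] (c : E → F → ℝ)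
    (X : Set E) (Y : Set F) (U : Set (E → ℝ)) (V : Set (F → ℝ))
    (μ : Measure E) (ν : Measure F) : Set ℝ :=
  {r | ∃ γ : Measure (E × F), IsFiniteMeasure γ ∧ γ ((X ×ˢ Y)ᶜ) = 0 ∧
    (∀ u ∈ U, ∫ x, u x ∂μ ≤ ∫ x, u x ∂(γ.map Prod.fst)) ∧
    (∀ v ∈ V, ∫ y, v y ∂(γ.map Prod.snd) ≤ ∫ y, v y ∂ν) ∧
    r = ∫ p, c p.1 p.2 ∂γ}

/-- The values of the problem dual to `relaxedTransportCosts`: pairs of potentials, taken from the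
test functions, whose difference is at most the cost `c` on `X × Y`. -/
def dualTransportValues {E F : Type*} [MeasurableSpace E] [MeasurableSpace F] (c : E → F → ℝ)
    (X : Set E) (Y : Set F) (U : Set (E → ℝ)) (V : Set (F → ℝ))
    (μ : Measure E) (ν : Measure F) : Set ℝ :=
  {r | ∃ φ ψ, φ ∈ U ∧ ψ ∈ V ∧ (∀ x ∈ X, ∀ y ∈ Y, φ x - ψ y ≤ c x y) ∧
    r = (∫ x, φ x ∂μ) - ∫ y, ψ y ∂ν}

/-- The constraints of the relaxed transport problem, as pairs `(f, r)` standing for the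
inequality `∫ f ∂γ ≤ r` on plans `γ`. -/
def transportConstraintCone {E F : Type*} [TopologicalSpace E] [TopologicalSpace F]
    [MeasurableSpace E] [MeasurableSpace F] (X : Set E) (Y : Set F)
    {U : PointedCone ℝ (E → ℝ)} {V : PointedCone ℝ (F → ℝ)} {μ : Measure E} {ν : Measure F}
    (hU : ∀ u ∈ U, Integrable u μ) (hV : ∀ v ∈ V, Integrable v ν) :
    PointedCone ℝ (C(X × Y, ℝ) × ℝ) where
  carrier := {p | ∃ φ ∈ U, ∃ ψ ∈ V, (∀ z : X × Y, p.1 z = ψ z.2 - φ z.1) ∧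
    p.2 = (∫ y, ψ y ∂ν) - ∫ x, φ x ∂μ}
  zero_mem' := ⟨0, U.zero_mem, 0, V.zero_mem, by simp, by simp⟩
  add_mem' := by
    rintro p p' ⟨φ, hφ, ψ, hψ, hf, hr⟩ ⟨φ', hφ', ψ', hψ', hf', hr'⟩
    refine ⟨φ + φ', U.add_mem hφ hφ', ψ + ψ', V.add_mem hψ hψ', fun z ↦ ?_, ?_⟩
    · simp only [Prod.fst_add, ContinuousMap.add_apply, Pi.add_apply, hf, hf']
      ring
    · rw [integral_add' (hV ψ hψ) (hV ψ' hψ'), integral_add' (hU φ hφ) (hU φ' hφ'), Prod.snd_add,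
        hr, hr']
      ring
  smul_mem' := by
    rintro a p ⟨φ, hφ, ψ, hψ, hf, hr⟩
    refine ⟨a • φ, U.smul_mem a.2 hφ, a • ψ, V.smul_mem a.2 hψ, fun z ↦ ?_, ?_⟩
    · change a.1 * p.1 z = a.1 * ψ z.2 - a.1 * φ z.1
      rw [hf, mul_sub]
    · change a.1 * p.2 = (∫ y, a.1 * ψ y ∂ν) - ∫ x, a.1 * φ x ∂μ
      rw [integral_const_mul, integral_const_mul, hr, mul_sub]

variable {E F : Type*} [TopologicalSpace E] [TopologicalSpace F] [MeasurableSpace E]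
  [MeasurableSpace F] {c : E → F → ℝ} {X : Set E} {Y : Set F} {μ : Measure E} {ν : Measure F}

theorem mk_mem_transportConstraintCone {U : PointedCone ℝ (E → ℝ)} {V : PointedCone ℝ (F → ℝ)}
    (hU : ∀ u ∈ U, Integrable u μ) (hV : ∀ v ∈ V, Integrable v ν) {φ : E → ℝ} (hφ : φ ∈ U)
    {ψ : F → ℝ} (hψ : ψ ∈ V) {f : X × Y → ℝ} (hf : Continuous f)
    (h : ∀ z, f z = ψ z.2 - φ z.1) :
    (⟨f, hf⟩, (∫ y, ψ y ∂ν) - ∫ x, φ x ∂μ) ∈ transportConstraintCone X Y hU hV :=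
  ⟨φ, hφ, ψ, hψ, h, rfl⟩

theorem dualTransportValues_nonempty {U : Set (E → ℝ)} {V : Set (F → ℝ)} (hX : IsCompact X)
    (hY : IsCompact Y) (hc : ContinuousOn (Function.uncurry c) (X ×ˢ Y)) (hU : 0 ∈ U)
    (hV : ∀ a : ℝ, (fun _ ↦ a) ∈ V) : (dualTransportValues c X Y U V μ ν).Nonempty := by
  obtain ⟨m, hm⟩ := (hX.prod hY).bddBelow_image hc
  refine ⟨_, 0, fun _ ↦ -m, hU, hV (-m), fun x hx y hy ↦ ?_, rfl⟩
  simpa using hm (mem_image_of_mem _ (mk_mem_prod hx hy))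

variable [T2Space E] [BorelSpace E] [T2Space F] [BorelSpace F]

theorem bddAbove_dualTransportValues [IsFiniteMeasure μ] [IsFiniteMeasure ν] {U : Set (E → ℝ)}
    {V : Set (F → ℝ)} (hX : IsCompact X) (hY : IsCompact Y)
    (hc : ContinuousOn (Function.uncurry c) (X ×ˢ Y)) (hU : ∀ u ∈ U, ContinuousOn u X)
    (hV : ∀ v ∈ V, ContinuousOn v Y) (hμ : μ Xᶜ = 0) (hν : ν Yᶜ = 0) (hmass : μ univ = ν univ) :
    BddAbove (dualTransportValues c X Y U V μ ν) := by
  obtain ⟨C, hC⟩ := (hX.prod hY).bddAbove_image hc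
  refine ⟨C * μ.real univ, ?_⟩
  rintro _ ⟨φ, ψ, hφ, hψ, hle, rfl⟩
  exact integral_sub_integral_le_of_sub_le hX hY hμ hν hmass (hU φ hφ) (hV ψ hψ)
    fun x hx y hy ↦ (hle x hx y hy).trans (hC (mem_image_of_mem _ (mk_mem_prod hx hy)))

variable [SecondCountableTopology E]

theorem le_of_mem_dualTransportValues {U : Set (E → ℝ)} {V : Set (F → ℝ)} (hX : IsCompact X)
    (hY : IsCompact Y) (hc : ContinuousOn (Function.uncurry c) (X ×ˢ Y))
    (hU : ∀ u ∈ U, ContinuousOn u X) (hV : ∀ v ∈ V, ContinuousOn v Y) {r d : ℝ}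
    (hr : r ∈ dualTransportValues c X Y U V μ ν) (hd : d ∈ relaxedTransportCosts c X Y U V μ ν) :
    r ≤ d := by
  obtain ⟨φ, ψ, hφ, hψ, hle, rfl⟩ := hr
  obtain ⟨γ, _, hγ, hfst, hsnd, rfl⟩ := hd
  have hγ' : ∀ᵐ p ∂γ, p ∈ X ×ˢ Y := hγ
  have hγX : ∀ᵐ p ∂γ, p.1 ∈ X := hγ'.mono fun p hp ↦ hp.1
  have hγY : ∀ᵐ p ∂γ, p.2 ∈ Y := hγ'.mono fun p hp ↦ hp.2
  have hφγ := integrable_comp_of_continuousOn_isCompact hX (hU φ hφ) measurable_fst hγX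
  have hψγ := integrable_comp_of_continuousOn_isCompact hY (hV ψ hψ) measurable_snd hγY
  calc (∫ x, φ x ∂μ) - ∫ y, ψ y ∂ν
      ≤ (∫ x, φ x ∂(γ.map Prod.fst)) - ∫ y, ψ y ∂(γ.map Prod.snd) :=
        sub_le_sub (hfst φ hφ) (hsnd ψ hψ)
    _ = ∫ p, (φ p.1 - ψ p.2) ∂γ := by
        rw [integral_map_of_continuousOn_isCompact hX (hU φ hφ) measurable_fst hγX,
          integral_map_of_continuousOn_isCompact hY (hV ψ hψ) measurable_snd hγY,
          integral_sub hφγ hψγ]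
    _ ≤ ∫ p, c p.1 p.2 ∂γ :=
        integral_mono_ae (hφγ.sub hψγ) (integrable_of_continuousOn_isCompact (hX.prod hY) hc hγ')
          (hγ'.mono fun p hp ↦ hle _ hp.1 _ hp.2)

theorem integral_mem_relaxedTransportCosts {U : Set (E → ℝ)} {V : Set (F → ℝ)} (hX : IsCompact X)
    (hY : IsCompact Y) (hc : ContinuousOn (Function.uncurry c) (X ×ˢ Y))
    (hU : ∀ u ∈ U, ContinuousOn u X) (hV : ∀ v ∈ V, ContinuousOn v Y)
    {γ : Measure (X × Y)} [IsFiniteMeasure γ]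
    (hfst : ∀ u ∈ U, ∫ x, u x ∂μ ≤ ∫ z, u z.1 ∂γ)
    (hsnd : ∀ v ∈ V, ∫ z, v z.2 ∂γ ≤ ∫ y, v y ∂ν) :
    ∫ z, c z.1 z.2 ∂γ ∈ relaxedTransportCosts c X Y U V μ ν := by
  have hι : Measurable (Prod.map Subtype.val Subtype.val : X × Y → E × F) :=
    measurable_subtype_coe.prodMap measurable_subtype_coe
  have hmem (z : X × Y) : Prod.map Subtype.val Subtype.val z ∈ X ×ˢ Y := ⟨z.1.2, z.2.2⟩
  refine ⟨γ.map (Prod.map Subtype.val Subtype.val), inferInstance, ?_, fun u hu ↦ ?_,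
    fun v hv ↦ ?_, ?_⟩
  · exact (ae_map_iff hι.aemeasurable (hX.prod hY).measurableSet).2 (.of_forall hmem)
  · rw [Measure.map_map measurable_fst hι, integral_map_of_continuousOn_isCompact hX (hU u hu)
      (measurable_fst.comp hι) (.of_forall fun z ↦ z.1.2)]
    exact hfst u hu
  · rw [Measure.map_map measurable_snd hι, integral_map_of_continuousOn_isCompact hY (hV v hv)
      (measurable_snd.comp hι) (.of_forall fun z ↦ z.2.2)]
    exact hsnd v hv
  · exact (integral_map_of_continuousOn_isCompact (hX.prod hY) hc hι (.of_forall hmem)).symm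

theorem exists_mem_relaxedTransportCosts_le [IsFiniteMeasure μ] [IsFiniteMeasure ν]
    (hX : IsCompact X) (hY : IsCompact Y) (hc : ContinuousOn (Function.uncurry c) (X ×ˢ Y))
    {U : PointedCone ℝ (E → ℝ)} {V : PointedCone ℝ (F → ℝ)} (hU : ∀ u ∈ U, ContinuousOn u X)
    (hV : ∀ v ∈ V, ContinuousOn v Y) (hV_one : 1 ∈ V) (hμ : μ Xᶜ = 0) (hν : ν Yᶜ = 0)
    (hne : (dualTransportValues c X Y U V μ ν).Nonempty) {s : ℝ}
    (hs : s ∈ upperBounds (dualTransportValues c X Y U V μ ν)) :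
    ∃ d ∈ relaxedTransportCosts c X Y U V μ ν, d ≤ s := by
  have : CompactSpace X := isCompact_iff_compactSpace.1 hX
  have : CompactSpace Y := isCompact_iff_compactSpace.1 hY
  have hUμ : ∀ u ∈ U, Integrable u μ := fun u hu ↦
    integrable_of_continuousOn_isCompact hX (hU u hu) hμ
  have hVν : ∀ v ∈ V, Integrable v ν := fun v hv ↦
    integrable_of_continuousOn_isCompact hY (hV v hv) hν
  have hU_cont {φ : E → ℝ} (hφ : φ ∈ U) : Continuous fun z : X × Y ↦ φ z.1 :=
    (continuousOn_iff_continuous_domRestrict.1 (hU φ hφ)).comp continuous_fst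
  have hV_cont {ψ : F → ℝ} (hψ : ψ ∈ V) : Continuous fun z : X × Y ↦ ψ z.2 :=
    (continuousOn_iff_continuous_domRestrict.1 (hV ψ hψ)).comp continuous_snd
  let cost : C(X × Y, ℝ) := ⟨fun z ↦ c z.1 z.2, hc.comp_continuous
    (continuous_subtype_val.prodMap continuous_subtype_val) fun z ↦ ⟨z.1.2, z.2.2⟩⟩
  obtain ⟨γ, hγ_fin, hγ, hγ_cost⟩ := exists_measure_integral_le_and_integral_le
    (transportConstraintCone X Y hUμ hVν) (c := cost) (s := s)
    ⟨_, mk_mem_transportConstraintCone hUμ hVν U.zero_mem hV_one continuous_one (by simp)⟩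
    (by
      obtain ⟨_, φ, ψ, hφ, hψ, hle, -⟩ := hne
      refine ⟨_, mk_mem_transportConstraintCone hUμ hVν hφ hψ
        ((hV_cont hψ).sub (hU_cont hφ)) fun _ ↦ rfl, fun z ↦ ?_⟩
      exact (neg_sub _ _).trans_le (hle _ z.1.2 _ z.2.2))
    (by
      rintro p ⟨φ, hφ, ψ, hψ, hf, hr⟩ hle
      rw [hr, neg_sub]
      refine hs ⟨φ, ψ, hφ, hψ, fun x hx y hy ↦ ?_, rfl⟩
      have hle_xy : -p.1 (⟨x, hx⟩, ⟨y, hy⟩) ≤ c x y := hle (⟨x, hx⟩, ⟨y, hy⟩)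
      rwa [hf, neg_sub] at hle_xy)
  refine ⟨_, integral_mem_relaxedTransportCosts hX hY hc hU hV (fun u hu ↦ ?_) (fun v hv ↦ ?_),
    hγ_cost⟩
  · simpa [integral_neg] using hγ _
      (mk_mem_transportConstraintCone hUμ hVν hu V.zero_mem (hU_cont hu).neg (by simp))
  · simpa using hγ _
      (mk_mem_transportConstraintCone hUμ hVν U.zero_mem hv (hV_cont hv) (by simp))

theorem fenchel_rockafellar_step_general [IsFiniteMeasure μ] [IsFiniteMeasure ν]
    (hX : IsCompact X) (hY : IsCompact Y) (hc : ContinuousOn (Function.uncurry c) (X ×ˢ Y))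
    {U : PointedCone ℝ (E → ℝ)} {V : PointedCone ℝ (F → ℝ)} (hU : ∀ u ∈ U, ContinuousOn u X)
    (hV : ∀ v ∈ V, ContinuousOn v Y) (hV_const : ∀ a : ℝ, (fun _ ↦ a) ∈ V)
    (hμ : μ Xᶜ = 0) (hν : ν Yᶜ = 0) (hmass : μ univ = ν univ) :
    IsLeast (relaxedTransportCosts c X Y U V μ ν) (sSup (dualTransportValues c X Y U V μ ν)) := by
  have hne : (dualTransportValues c X Y U V μ ν).Nonempty :=
    dualTransportValues_nonempty hX hY hc U.zero_mem hV_const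
  have hbdd : BddAbove (dualTransportValues c X Y U V μ ν) :=
    bddAbove_dualTransportValues hX hY hc hU hV hμ hν hmass
  have hweak : sSup (dualTransportValues c X Y U V μ ν) ∈
      lowerBounds (relaxedTransportCosts c X Y U V μ ν) := fun d hd ↦
    csSup_le hne fun r hr ↦ le_of_mem_dualTransportValues hX hY hc hU hV hr hd
  obtain ⟨d, hd, hle⟩ := exists_mem_relaxedTransportCosts_le hX hY hc hU hV (hV_const 1) hμ hν hne
    fun r hr ↦ le_csSup hbdd hr
  exact ⟨hle.antisymm (hweak hd) ▸ hd, hweak⟩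

end RelaxedTransport

theorem continuous_uncurry_l1dist {n : ℕ} : Continuous (Function.uncurry (l1dist (n := n))) := by
  unfold l1dist Function.uncurry
  fun_prop

/-- The convex cone `𝒰(X)` of test functions for the dominance order `≽_cvx`. -/
def monotoneConvexCone {n : ℕ} {X : Set (Fin n → ℝ)} (hX : Convex ℝ X) :
    PointedCone ℝ ((Fin n → ℝ) → ℝ) where
  carrier := {u | memU X u}
  zero_mem' := ⟨continuousOn_const, fun _ _ _ _ _ ↦ le_rfl, convexOn_const 0 hX⟩
  add_mem' := fun ⟨hu, hu_mono, hu_conv⟩ ⟨hv, hv_mono, hv_conv⟩ ↦ ⟨hu.add hv,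
    fun x hx y hy h ↦ add_le_add (hu_mono x hx y hy h) (hv_mono x hx y hy h), hu_conv.add hv_conv⟩
  smul_mem' := fun a _ ⟨hu, hu_mono, hu_conv⟩ ↦ ⟨hu.const_smul a,
    fun x hx y hy h ↦ mul_le_mul_of_nonneg_left (hu_mono x hx y hy h) a.2, hu_conv.smul a.2⟩

theorem const_mem_monotoneConvexCone {n : ℕ} {X : Set (Fin n → ℝ)} (hX : Convex ℝ X) (a : ℝ) :
    (fun _ ↦ a) ∈ monotoneConvexCone hX :=
  ⟨continuousOn_const, fun _ _ _ _ _ ↦ le_rfl, convexOn_const a hX⟩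

/-- **Fenchel–Rockafellar duality step.** For a compact convex `X ⊆ ℝⁿ` and a finite signed
Borel measure `μ` on `X` with `μ(X) = 0` and Jordan decomposition `μ = μp − μn`, the infimum
of the transport cost over finite nonnegative `γ` on `X × X` with `γ₁ ≽_cvx μ₊` and
`γ₂ ≼_cvx μ₋` equals the supremum of `∫ φ dμ₊ − ∫ ψ dμ₋` over pairs `φ, ψ ∈ 𝒰(X)` with
`φ(x) − ψ(y) ≤ ‖x − y‖₁`; moreover the infimum is achieved. -/
theorem fenchel_rockafellar_step {n : ℕ} (X : Set (Fin n → ℝ))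
    (hXcomp : IsCompact X) (hXconv : Convex ℝ X)
    (μp μn : Measure (Fin n → ℝ)) [IsFiniteMeasure μp] [IsFiniteMeasure μn]
    (hμp : μp Xᶜ = 0) (hμn : μn Xᶜ = 0) (hjordan : μp.MutuallySingular μn)
    (hzero : μp Set.univ = μn Set.univ) :
    let D : Set ℝ := {r | ∃ γ : Measure ((Fin n → ℝ) × (Fin n → ℝ)), IsFiniteMeasure γ ∧
        γ ((X ×ˢ X)ᶜ) = 0 ∧
        (∀ v : (Fin n → ℝ) → ℝ, memU X v → (∫ x, v x ∂μp) ≤ ∫ x, v x ∂(γ.map Prod.fst)) ∧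
        (∀ v : (Fin n → ℝ) → ℝ, memU X v → (∫ x, v x ∂(γ.map Prod.snd)) ≤ ∫ x, v x ∂μn) ∧
        r = ∫ p, l1dist p.1 p.2 ∂γ}
    let P : Set ℝ := {r | ∃ φ ψ : (Fin n → ℝ) → ℝ, memU X φ ∧ memU X ψ ∧
        (∀ x ∈ X, ∀ y ∈ X, φ x - ψ y ≤ l1dist x y) ∧
        r = (∫ x, φ x ∂μp) - (∫ x, ψ x ∂μn)}
    sInf D = sSup P ∧ sInf D ∈ D := by
  have hleast := fenchel_rockafellar_step_general hXcomp hXcomp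
    continuous_uncurry_l1dist.continuousOn (U := monotoneConvexCone hXconv)
    (V := monotoneConvexCone hXconv) (fun _ hu ↦ hu.1) (fun _ hv ↦ hv.1)
    (const_mem_monotoneConvexCone hXconv) hμp hμn hzero
  exact ⟨hleast.csInf_eq, hleast.csInf_mem⟩
end
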